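/- Let Γ = S_2 with trivial representation τ and sign representation σ. Define a graded representation V by V^0 = V^3 = τ ⊕ σ^{⊕3}, V^1 = V^2 = τ^{⊕2} ⊕ σ^{⊕2}, and V^i = 0 otherwise. Then V is weakly equivariantly log concave (V^{i-1} ⊗ V^{i+1} embeds into V^i ⊗ V^i for all i), but V is not strongly equivariantly log concave: V^0 ⊗ V^3 ≅ τ^{⊕10} ⊕ σ^{⊕6} is not isomorphic to a subrepresentation of V^1 ⊗ V^2 ≅ τ^{⊕8} ⊕ σ^{⊕8}. -/

import Mathlib

open CategoryTheory MonoidalCategory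

noncomputable section

/-- The external direct sum of a finite family of representations. -/
def Representation.pi' {k G : Type*} [CommSemiring k] [Monoid G] {ι : Type*}
    {M : ι → Type*} [∀ i, AddCommMonoid (M i)] [∀ i, Module k (M i)]
    (ρ : ∀ i, Representation k G (M i)) : Representation k G (∀ i, M i) where
  toFun g := LinearMap.pi fun i => (ρ i g) ∘ₗ LinearMap.proj i
  map_one' := by ext; simp
  map_mul' g h := by ext; simp

/-- The sign representation of `S₂` on `ℚ`. -/
def signRepAux : Representation ℚ (Equiv.Perm (Fin 2)) ℚ where
  toFun g := ((Equiv.Perm.sign g : ℤ) : ℚ) • LinearMap.id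
  map_one' := by simp; rfl
  map_mul' g h := by ext; simp [smul_smul]; ring

/-- `τ^{⊕ a} ⊕ σ^{⊕ b}`, where `τ` is the trivial representation of `S₂` and `σ` is the
sign representation. -/
def VS2 (a b : ℕ) : FDRep ℚ (Equiv.Perm (Fin 2)) :=
  FDRep.of (Representation.pi' fun x : Fin a ⊕ Fin b =>
    Sum.elim (fun _ => Representation.trivial ℚ (G := Equiv.Perm (Fin 2)) (V := ℚ))
      (fun _ => signRepAux) x)

/-- `X` is isomorphic to a subrepresentation of `Y`. -/
def IsSubrep (X Y : FDRep ℚ (Equiv.Perm (Fin 2))) : Prop := ∃ f : X ⟶ Y, Mono f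

/-- The graded representation of Example 2.2:
`V^0 = V^3 = τ ⊕ σ^{⊕3}`, `V^1 = V^2 = τ^{⊕2} ⊕ σ^{⊕2}`, `V^i = 0` otherwise. -/
def Vex : ℕ → FDRep ℚ (Equiv.Perm (Fin 2)) := fun i =>
  if i = 0 ∨ i = 3 then VS2 1 3 else if i = 1 ∨ i = 2 then VS2 2 2 else VS2 0 0

/-!
A representation with a basis of eigenvectors is determined by the multiset of characters by which
the group acts on that basis. The multiplicity of a character is the dimension of its weight space,
which cannot decrease along an injective intertwining map, so `τ^a ⊕ σ^b` embeds into `τ^c ⊕ σ^d`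
exactly when `a ≤ c` and `b ≤ d`. Since tensor products of eigenvectors are eigenvectors for the
product character,
`(τ^a ⊕ σ^b) ⊗ (τ^c ⊕ σ^d) ≅ τ^(a * c + b * d) ⊕ σ^(a * d + b * c)`,
and log concavity becomes a pair of inequalities between multiplicities. They hold for
`V^0 ⊗ V^2` and `V^1 ⊗ V^3`, both `τ^8 ⊕ σ^8`, but fail for `V^0 ⊗ V^3`, as `10 > 8`.
-/

section Eigenbasis

variable {k G V W ι κ : Type*} [CommRing k] [Monoid G] [AddCommGroup V] [Module k V]
  [AddCommGroup W] [Module k W] {ρ : Representation k G V} {η : Representation k G W}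
  {b : Module.Basis ι k V} {c : Module.Basis κ k W} {χ : ι → G →* k} {ψ : κ → G →* k}

/-- The basis `b` splits `ρ` into lines, `G` acting on the line through `b i` by the
character `χ i`. -/
def IsEigenbasis (ρ : Representation k G V) (b : Module.Basis ι k V) (χ : ι → G →* k) : Prop :=
  ∀ g i, ρ g (b i) = χ i g • b i

/-- The simultaneous eigenspace of `ρ` for the character `θ`; its rank is the multiplicity of `θ`
in `ρ`. -/
def weightSpace (ρ : Representation k G V) (θ : G →* k) : Submodule k V :=
  ⨅ g, Module.End.eigenspace (ρ g) (θ g)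

lemma mem_weightSpace {θ : G →* k} {v : V} : v ∈ weightSpace ρ θ ↔ ∀ g, ρ g v = θ g • v := by
  simp only [weightSpace, Submodule.mem_iInf, Module.End.mem_eigenspace_iff]

lemma isEigenbasis_pi' [Finite ι] {ρ : ι → Representation k G k}
    (hρ : ∀ i g x, ρ i g x = χ i g * x) :
    IsEigenbasis (Representation.pi' ρ) (Pi.basisFun k ι) χ := by
  classical
  intro g i
  ext j
  obtain rfl | hne := eq_or_ne j i
  · simp [Representation.pi', hρ]
  · simp [Representation.pi', hρ, hne]

namespace IsEigenbasis

lemma tprod (hb : IsEigenbasis ρ b χ) (hc : IsEigenbasis η c ψ) :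
    IsEigenbasis (ρ.tprod η) (b.tensorProduct c) fun p => χ p.1 * ψ p.2 := by
  intro g p
  rw [Module.Basis.tensorProduct_apply', Representation.tprod_apply, TensorProduct.map_tmul, hb,
    hc, TensorProduct.smul_tmul_smul, MonoidHom.mul_apply]

lemma comp_eq_comp_of_apply_eq (hb : IsEigenbasis ρ b χ) (hc : IsEigenbasis η c ψ) {e : ι → κ}
    (he : ∀ i, ψ (e i) = χ i) {f : V →ₗ[k] W} (hf : ∀ i, f (b i) = c (e i)) (g : G) :
    f ∘ₗ ρ g = η g ∘ₗ f :=
  b.ext fun i => by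
    rw [LinearMap.comp_apply, LinearMap.comp_apply, hb, map_smul, hf, hc, he]

lemma nonempty_equiv (hb : IsEigenbasis ρ b χ) (hc : IsEigenbasis η c ψ) (e : ι ≃ κ)
    (he : ∀ i, ψ (e i) = χ i) : Nonempty (ρ.Equiv η) :=
  ⟨.mk (b.equiv c e) <| hb.comp_eq_comp_of_apply_eq hc he fun i => b.equiv_apply i c e⟩

lemma exists_injective_intertwiningMap (hb : IsEigenbasis ρ b χ) (hc : IsEigenbasis η c ψ)
    (e : ι ↪ κ) (he : ∀ i, ψ (e i) = χ i) :
    ∃ f : ρ.IntertwiningMap η, Function.Injective f :=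
  ⟨⟨b.constr k (c ∘ e), hb.comp_eq_comp_of_apply_eq hc he fun i => b.constr_basis k _ i⟩,
    b.injective_constr_of_linearIndependent (c.linearIndependent.comp e e.injective)⟩

lemma repr_apply (hb : IsEigenbasis ρ b χ) (g : G) (v : V) (i : ι) :
    b.repr (ρ g v) i = χ i g * b.repr v i := by
  suffices h : b.coord i ∘ₗ ρ g = χ i g • b.coord i from LinearMap.congr_fun h v
  classical
  refine b.ext fun j => ?_
  obtain rfl | hne := eq_or_ne j i
  · simp [hb g j]
  · simp [hb g j, hne]

lemma weightSpace_eq_span [IsDomain k] (hb : IsEigenbasis ρ b χ) (θ : G →* k) :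
    weightSpace ρ θ = Submodule.span k (b '' {i | χ i = θ}) := by
  refine le_antisymm (fun v hv => ?_) (Submodule.span_le.mpr ?_)
  · rw [b.mem_span_image]
    intro i hi
    ext g
    refine mul_right_cancel₀ (Finsupp.mem_support_iff.mp hi) ?_
    rw [← hb.repr_apply, mem_weightSpace.mp hv, map_smul, Finsupp.smul_apply, smul_eq_mul]
  · rintro _ ⟨i, rfl, rfl⟩
    exact mem_weightSpace.mpr fun g => hb g i

lemma finrank_weightSpace [IsDomain k] (hb : IsEigenbasis ρ b χ) (θ : G →* k) :
    Module.finrank k (weightSpace ρ θ) = {i | χ i = θ}.ncard := by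
  rw [hb.weightSpace_eq_span, Set.image_eq_range, ← Nat.card_coe_set_eq]
  exact Module.finrank_eq_nat_card_basis
    (Module.Basis.span (b.linearIndependent.comp _ Subtype.val_injective))

end IsEigenbasis

lemma finrank_weightSpace_le_of_injective [Nontrivial k] {θ : G →* k}
    [Module.Finite k (weightSpace η θ)] {f : ρ.IntertwiningMap η} (hf : Function.Injective f) :
    Module.finrank k (weightSpace ρ θ) ≤ Module.finrank k (weightSpace η θ) := by
  have maps_weightSpace : ∀ v ∈ weightSpace ρ θ, f.toLinearMap v ∈ weightSpace η θ := by
    intro v hv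
    refine mem_weightSpace.mpr fun g => ?_
    rw [f.toLinearMap_apply, ← f.isIntertwining, mem_weightSpace.mp hv, map_smul]
  exact LinearMap.finrank_le_finrank_of_injective
    (f := f.toLinearMap.restrict maps_weightSpace) fun _ _ h =>
      Subtype.ext (hf (congrArg Subtype.val h))

end Eigenbasis

section FDRep

universe u v

variable {k : Type u} {G : Type v} [CommRing k] [Monoid G] {X Y : FDRep k G}

lemma nonempty_iso_of_equiv (e : Representation.Equiv X.ρ Y.ρ) : Nonempty (X ≅ Y) :=
  ⟨(forget₂ (FDRep k G) (Rep k G)).preimageIso (Rep.mkIso e)⟩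

lemma exists_mono_iff_exists_injective [IsNoetherianRing k] :
    (∃ f : X ⟶ Y, Mono f) ↔
      ∃ f : Representation.IntertwiningMap X.ρ Y.ρ, Function.Injective f := by
  let F := forget₂ (FDRep k G) (Rep k G)
  constructor
  · rintro ⟨f, hf⟩
    exact ⟨(F.map f).hom, (Rep.mono_iff_injective (F.map f)).mp inferInstance⟩
  · rintro ⟨f, hf⟩
    let f' : F.obj X ⟶ F.obj Y := Rep.ofHom f
    have : Mono f' := (Rep.mono_iff_injective f').mpr hf
    exact ⟨F.preimage f', F.mono_of_mono_map (by rwa [F.map_preimage])⟩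

end FDRep

section Sign

variable (α : Type*) [Fintype α] [DecidableEq α]

/-- The sign of a permutation as a rational-valued character. -/
def signCharacter : Equiv.Perm α →* ℚ :=
  (Int.castRingHom ℚ).toMonoidHom.comp ((Units.coeHom ℤ).comp Equiv.Perm.sign)

lemma signCharacter_ne_one [Nontrivial α] : signCharacter α ≠ 1 := by
  obtain ⟨x, y, hxy⟩ := exists_pair_ne α
  intro h
  have h_swap := DFunLike.congr_fun h (Equiv.swap x y)
  norm_num [signCharacter, Equiv.Perm.sign_swap hxy] at h_swap

lemma signCharacter_mul_self : signCharacter α * signCharacter α = 1 := by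
  ext g
  rcases Int.units_eq_one_or (Equiv.Perm.sign g) with h | h <;> simp [signCharacter, h]

end Sign

lemma isSubrep_congr {X X' Y Y' : FDRep ℚ (Equiv.Perm (Fin 2))} (e : X ≅ X') (e' : Y ≅ Y') :
    IsSubrep X Y ↔ IsSubrep X' Y' :=
  ⟨fun ⟨f, _⟩ => ⟨e.inv ≫ f ≫ e'.hom, inferInstance⟩,
    fun ⟨f, _⟩ => ⟨e.hom ≫ f ≫ e'.inv, inferInstance⟩⟩

namespace VS2

/-- The characters through which `S₂` acts on the standard basis vectors of `VS2 a b`. -/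
def character (a b : ℕ) : Fin a ⊕ Fin b → Equiv.Perm (Fin 2) →* ℚ :=
  Sum.elim (fun _ => 1) (fun _ => signCharacter (Fin 2))

lemma isEigenbasis_basisFun (a b : ℕ) :
    IsEigenbasis (VS2 a b).ρ (Pi.basisFun ℚ (Fin a ⊕ Fin b)) (character a b) := by
  refine isEigenbasis_pi' ?_
  rintro (_ | _) g x
  · exact (one_mul x).symm
  · rfl

lemma finrank_weightSpace_one (a b : ℕ) :
    Module.finrank ℚ (weightSpace (VS2 a b).ρ 1) = a := by
  have eq_range_inl : {i | character a b i = 1} = Set.range Sum.inl := by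
    ext (i | i) <;> simp [character, signCharacter_ne_one]
  rw [(isEigenbasis_basisFun a b).finrank_weightSpace, eq_range_inl, ← Nat.card_coe_set_eq,
    Nat.card_range_of_injective Sum.inl_injective, Nat.card_fin]

lemma finrank_weightSpace_signCharacter (a b : ℕ) :
    Module.finrank ℚ (weightSpace (VS2 a b).ρ (signCharacter (Fin 2))) = b := by
  have eq_range_inr : {i | character a b i = signCharacter (Fin 2)} = Set.range Sum.inr := by
    ext (i | i) <;> simp [character, (signCharacter_ne_one (Fin 2)).symm]
  rw [(isEigenbasis_basisFun a b).finrank_weightSpace, eq_range_inr, ← Nat.card_coe_set_eq,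
    Nat.card_range_of_injective Sum.inr_injective, Nat.card_fin]

theorem isSubrep_iff {a b c d : ℕ} : IsSubrep (VS2 a b) (VS2 c d) ↔ a ≤ c ∧ b ≤ d := by
  rw [IsSubrep, exists_mono_iff_exists_injective]
  constructor
  · rintro ⟨f, hf⟩
    constructor
    · simpa only [finrank_weightSpace_one] using
        finrank_weightSpace_le_of_injective hf (θ := 1)
    · simpa only [finrank_weightSpace_signCharacter] using
        finrank_weightSpace_le_of_injective hf (θ := signCharacter (Fin 2))
  · rintro ⟨hac, hbd⟩
    refine (isEigenbasis_basisFun a b).exists_injective_intertwiningMap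
      (isEigenbasis_basisFun c d) ((Fin.castLEEmb hac).sumMap (Fin.castLEEmb hbd)) ?_
    rintro (i | i) <;> rfl

/-- Sorts the pairs of standard basis vectors of `VS2 a b` and `VS2 c d` by the character of their
tensor product: pairs of the same kind come first, since `τ ⊗ τ ≅ σ ⊗ σ ≅ τ`. -/
def tensorIndexEquiv (a b c d : ℕ) :
    (Fin a ⊕ Fin b) × (Fin c ⊕ Fin d) ≃ Fin (a * c + b * d) ⊕ Fin (a * d + b * c) :=
  calc
    _ ≃ Fin a × (Fin c ⊕ Fin d) ⊕ Fin b × (Fin c ⊕ Fin d) := .sumProdDistrib _ _ _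
    _ ≃ (Fin a × Fin c ⊕ Fin a × Fin d) ⊕ (Fin b × Fin d ⊕ Fin b × Fin c) :=
      .sumCongr (.prodSumDistrib _ _ _) ((Equiv.prodSumDistrib _ _ _).trans (.sumComm _ _))
    _ ≃ (Fin a × Fin c ⊕ Fin b × Fin d) ⊕ (Fin a × Fin d ⊕ Fin b × Fin c) :=
      .sumSumSumComm _ _ _ _
    _ ≃ (Fin (a * c) ⊕ Fin (b * d)) ⊕ (Fin (a * d) ⊕ Fin (b * c)) :=
      .sumCongr (.sumCongr finProdFinEquiv finProdFinEquiv)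
        (.sumCongr finProdFinEquiv finProdFinEquiv)
    _ ≃ _ := .sumCongr finSumFinEquiv finSumFinEquiv

lemma character_tensorIndexEquiv (a b c d : ℕ) (p : (Fin a ⊕ Fin b) × (Fin c ⊕ Fin d)) :
    character _ _ (tensorIndexEquiv a b c d p) =
      character a b p.1 * character c d p.2 := by
  obtain ⟨i | i, j | j⟩ := p
  · exact (one_mul _).symm
  · exact (one_mul _).symm
  · exact (mul_one _).symm
  · exact (signCharacter_mul_self (Fin 2)).symm

theorem nonempty_tensor_iso (a b c d : ℕ) :
    Nonempty (VS2 a b ⊗ VS2 c d ≅ VS2 (a * c + b * d) (a * d + b * c)) := by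
  have tensor_eigenbasis := (isEigenbasis_basisFun a b).tprod (isEigenbasis_basisFun c d)
  obtain ⟨e⟩ := tensor_eigenbasis.nonempty_equiv (isEigenbasis_basisFun _ _)
    (tensorIndexEquiv a b c d) (character_tensorIndexEquiv a b c d)
  exact nonempty_iso_of_equiv e

theorem isSubrep_tensor_iff {a b c d a' b' c' d' : ℕ} :
    IsSubrep (VS2 a b ⊗ VS2 c d) (VS2 a' b' ⊗ VS2 c' d') ↔
      a * c + b * d ≤ a' * c' + b' * d' ∧ a * d + b * c ≤ a' * d' + b' * c' := by
  obtain ⟨e⟩ := nonempty_tensor_iso a b c d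
  obtain ⟨e'⟩ := nonempty_tensor_iso a' b' c' d'
  rw [isSubrep_congr e e', isSubrep_iff]

end VS2

namespace Vex

lemma zero_eq : Vex 0 = VS2 1 3 := rfl

lemma one_eq : Vex 1 = VS2 2 2 := rfl

lemma two_eq : Vex 2 = VS2 2 2 := rfl

lemma three_eq : Vex 3 = VS2 1 3 := rfl

lemma eq_of_three_lt {i : ℕ} (hi : 3 < i) : Vex i = VS2 0 0 := by
  rw [Vex, if_neg (by lia), if_neg (by lia)]

lemma exists_eq_VS2 (i : ℕ) : ∃ a b, Vex i = VS2 a b := by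
  unfold Vex
  split_ifs <;> exact ⟨_, _, rfl⟩

theorem isSubrep_tensor_pred_succ {i : ℕ} (hi : 1 ≤ i) :
    IsSubrep (Vex (i - 1) ⊗ Vex (i + 1)) (Vex i ⊗ Vex i) := by
  obtain rfl | rfl | three_le : i = 1 ∨ i = 2 ∨ 3 ≤ i := by lia
  · rw [Nat.sub_self, zero_eq, one_eq, two_eq, VS2.isSubrep_tensor_iff]
    norm_num
  · rw [Nat.add_one_sub_one, one_eq, two_eq, three_eq, VS2.isSubrep_tensor_iff]
    norm_num
  · obtain ⟨a, b, pred_eq⟩ := exists_eq_VS2 (i - 1)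
    obtain ⟨c, d, self_eq⟩ := exists_eq_VS2 i
    rw [pred_eq, self_eq, eq_of_three_lt (by lia), VS2.isSubrep_tensor_iff]
    simp

theorem not_isSubrep_zero_tensor_three : ¬ IsSubrep (Vex 0 ⊗ Vex 3) (Vex 1 ⊗ Vex 2) := by
  rw [zero_eq, three_eq, one_eq, two_eq, VS2.isSubrep_tensor_iff]
  norm_num

end Vex

/-- `V` is weakly equivariantly log concave, `V^0 ⊗ V^3 ≅ τ^{⊕10} ⊕ σ^{⊕6}`,
`V^1 ⊗ V^2 ≅ τ^{⊕8} ⊕ σ^{⊕8}`, `V^0 ⊗ V^3` is not isomorphic to a subrepresentation of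
`V^1 ⊗ V^2`, and hence `V` is not strongly equivariantly log concave. -/
theorem stmt7 :
    (∀ i : ℕ, 1 ≤ i → IsSubrep (Vex (i - 1) ⊗ Vex (i + 1)) (Vex i ⊗ Vex i)) ∧
    Nonempty ((Vex 0 ⊗ Vex 3) ≅ VS2 10 6) ∧
    Nonempty ((Vex 1 ⊗ Vex 2) ≅ VS2 8 8) ∧
    ¬ IsSubrep (Vex 0 ⊗ Vex 3) (Vex 1 ⊗ Vex 2) ∧
    ¬ (∀ i j k l : ℕ, i ≤ j → j ≤ k → k ≤ l → j + k = i + l →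
        IsSubrep (Vex i ⊗ Vex l) (Vex j ⊗ Vex k)) :=
  ⟨fun _ => Vex.isSubrep_tensor_pred_succ, VS2.nonempty_tensor_iso 1 3 1 3,
    VS2.nonempty_tensor_iso 2 2 2 2, Vex.not_isSubrep_zero_tensor_three, fun strong =>
      Vex.not_isSubrep_zero_tensor_three (strong 0 1 2 3 (by lia) (by lia) (by lia) rfl)⟩

end
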